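/- For every x ∈ C_t and every ν ∈ ℕ one has w^ν · d^ν(x) ∈ C_t. -/

import Mathlib

/-!
The derivation `w • d` maps `A` into `I`, hence preserves every power of `I` by the Leibniz rule.
The identity `t * E (t ^ n * x) = t ^ (n + 1) * E x + n * E t * (t ^ n * x)`, applied to
`E = w • d`, then shows that `w • d` preserves `C_t`: it gives
`t ^ (n + 1) * E x ∈ t * I ^ (n * D) + E t * I ^ (n * D) ⊆ I ^ ((n + 1) * D)`.
The same identity for `d`, with `w` in place of `t`, gives the recursion
`y (ν + 1) = w * d (y ν) - ν * d w * y ν` for `y ν = w ^ ν * d^[ν] x`, and `C_t` is an `A`-module.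
-/

section Derivation

variable {R A K : Type*} [CommSemiring R]

theorem mul_derivation_pow_mul [CommSemiring K] [Algebra R K] (d : Derivation R K K)
    (s x : K) (n : ℕ) :
    s * d (s ^ n * x) = s ^ (n + 1) * d x + n * d s * (s ^ n * x) := by
  induction n with
  | zero => simp
  | succ n ih =>
    calc s * d (s ^ (n + 1) * x) = s * d (s * (s ^ n * x)) := by rw [pow_succ', mul_assoc]
      _ = s * (s * d (s ^ n * x)) + d s * (s ^ (n + 1) * x) := by
        rw [d.leibniz, smul_eq_mul, smul_eq_mul]
        ring
      _ = s ^ (n + 1 + 1) * d x + (n + 1 : ℕ) * d s * (s ^ (n + 1) * x) := by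
        rw [ih]
        push_cast
        ring

theorem derivation_mem_ideal_pow [CommSemiring A] [Algebra R A] (d : Derivation R A A)
    {I : Ideal A} (hd : ∀ a ∈ I, d a ∈ I) (m : ℕ) {a : A} (ha : a ∈ I ^ m) : d a ∈ I ^ m := by
  induction m generalizing a with
  | zero => simp
  | succ m ih =>
    rw [pow_succ] at ha ⊢
    refine Submodule.mul_induction_on ha (fun b hb c hc ↦ ?_) (fun b c hb hc ↦ ?_)
    · rw [d.leibniz, smul_eq_mul, smul_eq_mul, mul_comm c]
      exact add_mem (Ideal.mul_mem_mul hb (hd c hc)) (Ideal.mul_mem_mul (ih hb) hc)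
    · rw [map_add]
      exact add_mem hb hc

theorem pow_mul_iterate_derivation_mem [CommRing K] [Algebra R K] (d : Derivation R K K)
    {S : Type*} [SetLike S K] [AddSubgroupClass S K] {M : S} {w : K}
    (hwd : ∀ x ∈ M, w * d x ∈ M) (hdw : ∀ x ∈ M, d w * x ∈ M) {x : K} (hx : x ∈ M) (ν : ℕ) :
    w ^ ν * d^[ν] x ∈ M := by
  induction ν with
  | zero => simpa using hx
  | succ ν ih =>
    have recursion : w ^ (ν + 1) * d^[ν + 1] x =
        w * d (w ^ ν * d^[ν] x) - ν • (d w * (w ^ ν * d^[ν] x)) := by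
      rw [mul_derivation_pow_mul, Function.iterate_succ_apply', nsmul_eq_mul, mul_assoc (ν : K),
        add_sub_cancel_right]
    rw [recursion]
    exact sub_mem (hwd _ ih) (nsmul_mem (hdw _ ih) ν)

end Derivation

section ReesChart

variable {R A K : Type*} [CommSemiring R] [CommRing A] [CommRing K] [Algebra R A] [Algebra R K]
  [Algebra A K] {I : Ideal A} {D : ℕ} {t : A}

variable (K) in
/-- The algebra `C_t` of those `x : K` with `t ^ n * x ∈ I ^ (n * D)` for some `n`. When `t` is
invertible in `K` and `A ⊆ K`, this is the degree-zero part of the homogeneous localization at `t`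
of the Rees algebra of `I`, that is, a chart of the blow-up of `I`. For a general `A`-algebra `K`,
membership in `I ^ (n * D)` means being the image of an element of it. -/
def reesChart (ht : t ∈ I ^ D) : Subalgebra A K where
  carrier := {x | ∃ n : ℕ, ∃ a ∈ I ^ (n * D), algebraMap A K t ^ n * x = algebraMap A K a}
  algebraMap_mem' a := ⟨0, a, by simp, by simp⟩
  add_mem' := by
    rintro x y ⟨n, a, ha, hx⟩ ⟨m, b, hb, hy⟩
    have pow_mem (k : ℕ) : t ^ k ∈ I ^ (k * D) := by
      rw [mul_comm, pow_mul]
      exact Ideal.pow_mem_pow ht k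
    refine ⟨n + m, a * t ^ m + t ^ n * b, ?_, ?_⟩
    · rw [add_mul, pow_add]
      exact add_mem (Ideal.mul_mem_mul ha (pow_mem m)) (Ideal.mul_mem_mul (pow_mem n) hb)
    · rw [map_add, map_mul, map_mul, map_pow, map_pow, ← hx, ← hy]
      ring
  mul_mem' := by
    rintro x y ⟨n, a, ha, hx⟩ ⟨m, b, hb, hy⟩
    refine ⟨n + m, a * b, ?_, ?_⟩
    · rw [add_mul, pow_add]
      exact Ideal.mul_mem_mul ha hb
    · rw [map_mul, ← hx, ← hy]
      ring

theorem derivation_mem_reesChart (E : Derivation R K K) (ε : Derivation R A A)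
    (hE : ∀ a, E (algebraMap A K a) = algebraMap A K (ε a)) (hε : ∀ a ∈ I, ε a ∈ I)
    (ht : t ∈ I ^ D) {x : K} (hx : x ∈ reesChart K ht) : E x ∈ reesChart K ht := by
  obtain ⟨n, a, ha, hxa⟩ := hx
  refine ⟨n + 1, t * ε a - ε t * (n * a), ?_, ?_⟩
  · rw [add_one_mul, add_comm, pow_add]
    exact sub_mem (Ideal.mul_mem_mul ht (derivation_mem_ideal_pow ε hε _ ha))
      (Ideal.mul_mem_mul (derivation_mem_ideal_pow ε hε _ ht) (Ideal.mul_mem_left _ _ ha))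
  · have leibniz := mul_derivation_pow_mul E (algebraMap A K t) x n
    rw [hxa, hE, hE] at leibniz
    simp only [map_sub, map_mul, map_natCast]
    linear_combination -leibniz

theorem statement9_general (d : Derivation R K K) (δ : Derivation R A A)
    (hδ : ∀ a, d (algebraMap A K a) = algebraMap A K (δ a)) {w : A} (hw : w ∈ I)
    (ht : t ∈ I ^ D) {x : K} (hx : x ∈ reesChart K ht) (ν : ℕ) :
    algebraMap A K w ^ ν * d^[ν] x ∈ reesChart K ht := by
  refine pow_mul_iterate_derivation_mem d (fun y hy ↦ ?_) (fun y hy ↦ ?_) hx ν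
  · exact derivation_mem_reesChart (algebraMap A K w • d) (w • δ)
      (fun a ↦ by simp [hδ, Algebra.smul_def]) (fun a _ ↦ I.mul_mem_right (δ a) hw) ht hy
  · rw [hδ]
    exact mul_mem (algebraMap_mem _ _) hy

end ReesChart

section Subring

variable {K : Type*} [CommRing K]

/-- An additive map satisfying the Leibniz rule, as a bundled derivation over `ℤ`. -/
def derivationOfLeibniz (d : K → K) (hadd : ∀ a b : K, d (a + b) = d a + d b)
    (hleib : ∀ a b : K, d (a * b) = a * d b + b * d a) : Derivation ℤ K K :=
  .mk' (AddMonoidHom.mk' d hadd).toIntLinearMap hleib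

/-- The derivation that `d` induces on a subring it preserves. -/
def restrictDerivation (d : Derivation ℤ K K) (A : Subring K) (hdA : ∀ a ∈ A, d a ∈ A) :
    Derivation ℤ A A :=
  derivationOfLeibniz (fun a ↦ ⟨d a, hdA a a.2⟩) (fun a b ↦ Subtype.ext (d.map_add a b))
    (fun a b ↦ Subtype.ext (d.leibniz a b))

end Subring

/-- Level-zero case, for a single derivation, of Lemma 2.1.4(ii): let `A` be a subring of a
commutative ring `K`, `d : K → K` a derivation with `d(A) ⊆ A`, `I` an ideal of `A`,
`w ∈ I`, `D ≥ 1` and `t ∈ I^D` invertible in `K`. Let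
`C_t = {x ∈ K : ∃ n, t^n·x ∈ I^{nD}}`. Then for every `x ∈ C_t` and every `ν ∈ ℕ` one has
`w^ν · d^ν(x) ∈ C_t`. -/
theorem statement9 {K : Type*} [CommRing K] (A : Subring K) (d : K → K)
    (hadd : ∀ a b : K, d (a + b) = d a + d b)
    (hleib : ∀ a b : K, d (a * b) = a * d b + b * d a)
    (hdA : ∀ a ∈ A, d a ∈ A)
    (I : Ideal A) (w : A) (hw : w ∈ I)
    (D : ℕ) (hD : 1 ≤ D) (t : A) (ht : t ∈ I ^ D)
    (tinv : K) (htinv : (t : K) * tinv = 1)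
    (x : K) (hx : ∃ n : ℕ, ∃ a ∈ I ^ (n * D), (t : K) ^ n * x = (a : K)) (ν : ℕ) :
    ∃ n : ℕ, ∃ a ∈ I ^ (n * D), (t : K) ^ n * ((w : K) ^ ν * (d^[ν] x)) = (a : K) := by
  let d' := derivationOfLeibniz d hadd hleib
  exact statement9_general d' (restrictDerivation d' A hdA) (fun _ ↦ rfl) hw ht hx ν
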